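/- Let K ⊂ ℝⁿ be a bounded open set with smooth boundary, h a polynomial vanishing on ∂K, f a homogeneous polynomial of degree d_f. Then for every multi-index α, ∫_K [x^α h(x)(n + d_f f(x)) + ⟨x, ∇(x^α h)(x)⟩] e^{f(x)} dλ(x) = 0. -/

import Mathlib

/-!
Write `P = x ^ α * h`. The vector field `x ↦ P x * exp (f x) • x` vanishes on `∂K`, and its
divergence is the integrand, by Euler's identity `∑ i, x i * ∂ᵢ f = df * f`. It therefore suffices that
`∫_K ∂ᵥ u = 0` for every `C¹` function `u` vanishing on `∂K` (`setIntegral_fderiv_eq_zero`), with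
no regularity of the boundary beyond its having measure zero. The point is that the extension of
`u|_K` by zero is globally Lipschitz: a segment leaving `K` crosses `∂K`, where `u` vanishes. This
extension has compact support, so the integral of its directional derivative over the whole space
vanishes, by integration by parts against the constant `1`, for Lipschitz functions. Off the null
set `∂K`, that derivative is `∂ᵥ u` on `K` and zero elsewhere.
-/

open MeasureTheory MvPolynomial

/-- A segment from a point of an open set to a point outside it meets the frontier. -/
lemma exists_mem_segment_frontier {E : Type*} [NormedAddCommGroup E] [NormedSpace ℝ E]
    {K : Set E} (hK : IsOpen K) {x y : E} (hx : x ∈ K) (hy : y ∉ K) :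
    ∃ z ∈ segment ℝ x y, z ∈ frontier K := by
  by_contra! hcon
  have hout : ∀ z ∈ segment ℝ x y, z ∉ K → z ∈ (closure K)ᶜ := fun z hz hzK hzc =>
    hcon z hz (by rw [hK.frontier_eq]; exact ⟨hzc, hzK⟩)
  obtain ⟨z, -, hz1, hz2⟩ := (convex_segment (𝕜 := ℝ) x y).isPreconnected K (closure K)ᶜ hK
    isClosed_closure.isOpen_compl
    (fun z hz => (em (z ∈ K)).imp id (hout z hz))
    ⟨x, left_mem_segment ℝ x y, hx⟩
    ⟨y, right_mem_segment ℝ x y, hout y (right_mem_segment ℝ x y) hy⟩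
  exact hz2 (subset_closure hz1)

/-- The extension by zero of a `C¹` function vanishing on the frontier is globally Lipschitz, with
the Lipschitz constant of the function on the compact set `closure K`. -/
lemma exists_lipschitzWith_indicator {E : Type*} [NormedAddCommGroup E] [NormedSpace ℝ E]
    [FiniteDimensional ℝ E] {K : Set E} (hK : IsOpen K) (hKb : Bornology.IsBounded K)
    {u : E → ℝ} (hu : ContDiff ℝ 1 u) (hu0 : ∀ x ∈ frontier K, u x = 0) :
    ∃ C, LipschitzWith C (K.indicator u) := by
  have := FiniteDimensional.proper ℝ E
  obtain ⟨C, hC⟩ := (hu.locallyLipschitz.locallyLipschitzOn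
    (s := closure K)).exists_lipschitzOnWith_of_compact hKb.isCompact_closure
  have key : ∀ x ∈ K, ∀ y ∉ K, dist (u x) 0 ≤ C * dist x y := by
    intro x hx y hy
    obtain ⟨z, hz, hzK⟩ := exists_mem_segment_frontier hK hx hy
    calc dist (u x) 0 = dist (u x) (u z) := by rw [hu0 z hzK]
      _ ≤ C * dist x z := hC.dist_le_mul x (subset_closure hx) z (frontier_subset_closure hzK)
      _ ≤ C * dist x y := by
        gcongr
        linarith [dist_add_dist_of_mem_segment hz, dist_nonneg (x := z) (y := y)]
  refine ⟨C, LipschitzWith.of_dist_le_mul fun x y => ?_⟩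
  by_cases hx : x ∈ K <;> by_cases hy : y ∈ K
  · simpa [hx, hy] using hC.dist_le_mul x (subset_closure hx) y (subset_closure hy)
  · simpa [hx, hy] using key x hx y hy
  · simpa [hx, hy, dist_comm] using key y hy x hx
  · simp only [Set.indicator_of_notMem hx, Set.indicator_of_notMem hy, dist_self]
    positivity

/-- The divergence theorem for a field of constant direction `v` whose coefficient vanishes on the
frontier. -/
lemma setIntegral_fderiv_eq_zero {E : Type*} [NormedAddCommGroup E] [NormedSpace ℝ E]
    [FiniteDimensional ℝ E] [MeasurableSpace E] [BorelSpace E] {μ : Measure E} [μ.IsAddHaarMeasure]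
    {K : Set E} (hK : IsOpen K) (hKb : Bornology.IsBounded K) (hKs : μ (frontier K) = 0)
    {u : E → ℝ} (hu : ContDiff ℝ 1 u) (hu0 : ∀ x ∈ frontier K, u x = 0) (v : E) :
    ∫ x in K, fderiv ℝ u x v ∂μ = 0 := by
  have := FiniteDimensional.proper ℝ E
  obtain ⟨C, hC⟩ := exists_lipschitzWith_indicator hK hKb hu hu0
  have hsupp : HasCompactSupport (K.indicator u) :=
    HasCompactSupport.intro hKb.isCompact_closure fun x hx =>
      Set.indicator_of_notMem (fun h => hx (subset_closure h)) u
  have hzero : ∫ x, lineDeriv ℝ (K.indicator u) x v ∂μ = 0 := by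
    -- Integration by parts flips the sign of the direction, hence `-v`.
    have := LipschitzWith.integral_lineDeriv_mul_eq (μ := μ)
      (LipschitzWith.const (1 : ℝ)) hC hsupp (-v)
    simpa [lineDeriv] using this.symm
  rw [← integral_indicator hK.measurableSet, ← hzero]
  refine integral_congr_ae ?_
  filter_upwards [measure_eq_zero_iff_ae_notMem.1 hKs] with x hx
  by_cases hxK : x ∈ K
  · have : K.indicator u =ᶠ[nhds x] u := by
      filter_upwards [hK.mem_nhds hxK] with y hy using Set.indicator_of_mem hy u
    rw [this.lineDeriv_eq, Set.indicator_of_mem hxK,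
      (hu.differentiable (by simp) x).lineDeriv_eq_fderiv]
  · have hxc : x ∉ closure K := fun h => hx (by rw [hK.frontier_eq]; exact ⟨h, hxK⟩)
    have : K.indicator u =ᶠ[nhds x] fun _ => 0 := by
      filter_upwards [isClosed_closure.isOpen_compl.mem_nhds hxc] with y hy
      exact Set.indicator_of_notMem (fun h => hy (subset_closure h)) u
    rw [this.lineDeriv_eq, Set.indicator_of_notMem hxK]
    simp [lineDeriv]

lemma contDiff_eval {n : ℕ} (p : MvPolynomial (Fin n) ℝ) :
    ContDiff ℝ 1 (fun x : Fin n → ℝ => eval x p) :=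
  (AnalyticOnNhd.eval_mvPolynomial p).contDiff

lemma hasFDerivAt_eval {n : ℕ} (p : MvPolynomial (Fin n) ℝ) (x : Fin n → ℝ) :
    HasFDerivAt (fun x : Fin n → ℝ => eval x p)
      (∑ i, eval x (pderiv i p) • ContinuousLinearMap.proj (R := ℝ) (φ := fun _ => ℝ) i) x := by
  induction p using MvPolynomial.induction_on with
  | C a => simpa using hasFDerivAt_const a x
  | add p q hp hq =>
    simpa [add_smul, Finset.sum_add_distrib] using hp.fun_add hq
  | mul_X p j hp =>
    have := hp.mul (hasFDerivAt_apply (𝕜 := ℝ) j x)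
    simp only [map_mul, eval_X]
    refine this.congr_fderiv ?_
    ext v
    simp [Derivation.leibniz, pderiv_X, add_mul, Finset.sum_add_distrib, Pi.single_apply,
      Finset.mul_sum, mul_assoc, apply_ite, ite_mul, Finset.sum_ite_eq]

theorem stmt_12 (n : ℕ) (K : Set (Fin n → ℝ)) (hKo : IsOpen K)
    (hKb : Bornology.IsBounded K) (hKs : volume (frontier K) = 0)
    (h : MvPolynomial (Fin n) ℝ)
    (hvanish : ∀ x ∈ frontier K, eval x h = 0)
    (f : MvPolynomial (Fin n) ℝ) (df : ℕ) (hf : f.IsHomogeneous df)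
    (α : Fin n → ℕ) :
    ∫ x in K,
      (eval x ((∏ j, X j ^ α j) * h) * ((n : ℝ) + (df : ℝ) * eval x f)
        + ∑ i, x i * eval x (pderiv i ((∏ j, X j ^ α j) * h)))
      * Real.exp (eval x f) ∂volume = 0 := by
  have hP0 : ∀ x ∈ frontier K, eval x ((∏ j, X j ^ α j) * h) = 0 := fun x hx => by
    rw [map_mul, hvanish x hx, mul_zero]
  generalize (∏ j, X j ^ α j) * h = P at hP0 ⊢
  -- `u i` is the `i`-th component of the vector field.
  let u : Fin n → (Fin n → ℝ) → ℝ := fun i x => x i * eval x P * Real.exp (eval x f)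
  have hu : ∀ i, ContDiff ℝ 1 (u i) := fun i =>
    ((contDiff_apply ℝ ℝ i).mul (contDiff_eval P)).mul (contDiff_eval f).exp
  have hint : ∀ i, ∫ x in K, fderiv ℝ (u i) x (Pi.single i 1) = 0 := fun i =>
    setIntegral_fderiv_eq_zero hKo hKb hKs (hu i) (fun x hx => by simp [u, hP0 x hx]) _
  have hderiv : ∀ i x, fderiv ℝ (u i) x (Pi.single i 1) =
      (eval x P + x i * eval x (pderiv i P) + eval x P * (x i * eval x (pderiv i f)))
        * Real.exp (eval x f) := by
    intro i x
    have := ((hasFDerivAt_apply (𝕜 := ℝ) i x).mul (hasFDerivAt_eval P x)).mul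
      (hasFDerivAt_eval f x).exp
    rw [HasFDerivAt.fderiv (f := u i) this]
    simp [Pi.single_apply]
    ring
  have heuler : ∀ x, ∑ i, x i * eval x (pderiv i f) = df * eval x f := fun x => by
    simpa using congrArg (eval x) hf.sum_X_mul_pderiv
  have hdiv : ∀ x, (eval x P * ((n : ℝ) + (df : ℝ) * eval x f)
      + ∑ i, x i * eval x (pderiv i P)) * Real.exp (eval x f)
      = ∑ i, fderiv ℝ (u i) x (Pi.single i 1) := fun x => by
    simp only [hderiv]
    rw [← Finset.sum_mul, Finset.sum_add_distrib, Finset.sum_add_distrib, ← Finset.mul_sum, heuler]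
    simp
    ring
  simp only [hdiv]
  rw [integral_finsetSum]
  · exact Finset.sum_eq_zero fun i _ => hint i
  · intro i _
    have hc : Continuous fun x => fderiv ℝ (u i) x (Pi.single i 1) :=
      ((hu i).continuous_fderiv (by simp)).clm_apply continuous_const
    exact (hc.continuousOn.integrableOn_compact hKb.isCompact_closure).mono_set subset_closure
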